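/- No-outliers variant of the finite-Minkowski-dimension bound: Suppose ℓ(θ,z) is L-Lipschitz in θ for every z and takes values in an interval of length b, Θ̂ⁿ ⊂ ℝ^k is finite and non-focal with |Θ̂ⁿ| > 2, and L·∇(Θ̂ⁿ) ≤ b·√( (2·dim_fM(Θ̂ⁿ)/n) · log(Δ(Θ̂ⁿ)/∇(Θ̂ⁿ)) ). Then Rad(Θ̂ⁿ, S⁺) ≤ 2b·√( (2·dim_fM(Θ̂ⁿ)/n) · log(Δ(Θ̂ⁿ)/∇(Θ̂ⁿ)) ). -/

import Mathlib

open MeasureTheory Real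

/-- Empirical Rademacher complexity of the set `C` on the sample `S` (`true ↔ +1`). -/
noncomputable def rad {X Z : Type*} (ℓ : X → Z → ℝ) {n : ℕ} (C : Set X) (S : Fin n → Z) : ℝ :=
  (n : ℝ)⁻¹ * ((2 ^ n : ℝ)⁻¹ *
    ∑ σ : Fin n → Bool, sSup ((fun θ => ∑ i, (if σ i then (1 : ℝ) else -1) * ℓ θ (S i)) '' C))

/-- Nearest-neighbour distance `ν_C(a) = min {d(a,b) : b ∈ C, b ≠ a}`. -/
noncomputable def nnDist {X : Type*} [PseudoMetricSpace X] (C : Finset X) (a : X) : ℝ :=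
  sInf ((fun b => dist a b) '' {b | b ∈ C ∧ b ≠ a})

/-- Covering diameter `∇(C) = max_{a ∈ C} ν_C(a)`. -/
noncomputable def covDiam {X : Type*} [PseudoMetricSpace X] (C : Finset X) : ℝ :=
  sSup (nnDist C '' (C : Set X))

/-- `T(C)`: minimal cardinality of a 2-cover of `C` (a family of subsets of `C`, each with at
least two elements, covering `C`) all of whose members have diameter at most `∇(C)`. -/
noncomputable def Tnum {X : Type*} [PseudoMetricSpace X] (C : Finset X) : ℕ :=
  sInf {m : ℕ | ∃ U : Finset (Finset X), U.card = m ∧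
    (∀ u ∈ U, u ⊆ C ∧ 2 ≤ u.card ∧ Metric.diam (u : Set X) ≤ covDiam C) ∧
    ∀ a ∈ C, ∃ u ∈ U, a ∈ u}

/-- Finite Minkowski dimension `dim_fM(C) = log T(C) / log(Δ(C)/∇(C))`. -/
noncomputable def dimfM {X : Type*} [PseudoMetricSpace X] (C : Finset X) : ℝ :=
  Real.log (Tnum C) / Real.log (Metric.diam (C : Set X) / covDiam C)

/-- Sign attached to a Boolean. -/
noncomputable def sgnB (x : Bool) : ℝ := if x then (1 : ℝ) else -1

lemma sum_exp_sign {n : ℕ} (g : Fin n → ℝ) (B lam : ℝ) (hg : ∀ i, |g i| ≤ B) :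
    ∑ σ : Fin n → Bool, Real.exp (lam * ∑ i, sgnB (σ i) * g i)
      ≤ 2 ^ n * Real.exp (n * (lam ^ 2 * B ^ 2 / 2)) := by
  have h1 : ∀ σ : Fin n → Bool, Real.exp (lam * ∑ i, sgnB (σ i) * g i)
      = ∏ i, Real.exp (lam * (sgnB (σ i) * g i)) := by
    intro σ
    rw [Finset.mul_sum, Real.exp_sum]
  simp_rw [h1]
  have h2 := (Finset.prod_univ_sum (fun _ : Fin n => (Finset.univ : Finset Bool))
    (fun i x => Real.exp (lam * (sgnB x * g i))))
  rw [Fintype.piFinset_univ] at h2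
  rw [← h2]
  have h3 : ∀ i : Fin n, ∑ x : Bool, Real.exp (lam * (sgnB x * g i))
      ≤ 2 * Real.exp (lam ^ 2 * B ^ 2 / 2) := by
    intro i
    have h4 : ∑ x : Bool, Real.exp (lam * (sgnB x * g i)) = 2 * Real.cosh (lam * g i) := by
      rw [Real.cosh_eq]
      simp [sgnB]
      ring
    rw [h4]
    have h5 := Real.cosh_le_exp_half_sq (lam * g i)
    have h6 : (lam * g i) ^ 2 / 2 ≤ lam ^ 2 * B ^ 2 / 2 := by
      have : g i ^ 2 ≤ B ^ 2 := sq_le_sq' (by linarith [(abs_le.1 (hg i)).1]) (abs_le.1 (hg i)).2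
      have := mul_le_mul_of_nonneg_left this (sq_nonneg lam)
      rw [mul_pow]; linarith
    have h7 := Real.exp_le_exp.2 h6
    linarith
  calc _ ≤ ∏ i : Fin n, (2 * Real.exp (lam ^ 2 * B ^ 2 / 2)) :=
        Finset.prod_le_prod (fun i _ => Finset.sum_nonneg fun x _ => (Real.exp_pos _).le)
          (fun i _ => h3 i)
    _ = _ := by
        rw [Finset.prod_const, Finset.card_univ, Fintype.card_fin, mul_pow, ← Real.exp_nat_mul]

lemma massart_lam {ι : Type*} {n : ℕ} (U : Finset ι) (hU : U.Nonempty) (g : ι → Fin n → ℝ)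
    (B lam : ℝ) (hg : ∀ u i, |g u i| ≤ B) (v : (Fin n → Bool) → ι) (hv : ∀ σ, v σ ∈ U) :
    lam * ((2 ^ n : ℝ)⁻¹ * ∑ σ : Fin n → Bool, ∑ i, sgnB (σ i) * g (v σ) i)
      ≤ Real.log U.card + n * (lam ^ 2 * B ^ 2 / 2) := by
  set c := Real.log U.card + n * (lam ^ 2 * B ^ 2 / 2) with hc
  have hcard : (0 : ℝ) < U.card := by exact_mod_cast hU.card_pos
  have hec : Real.exp c = U.card * Real.exp (n * (lam ^ 2 * B ^ 2 / 2)) := by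
    rw [hc, Real.exp_add, Real.exp_log hcard]
  set M : (Fin n → Bool) → ℝ := fun σ => ∑ i, sgnB (σ i) * g (v σ) i with hM
  have hE : ∑ σ, Real.exp (lam * M σ) ≤ 2 ^ n * Real.exp c := by
    calc ∑ σ, Real.exp (lam * M σ)
        ≤ ∑ σ : Fin n → Bool, ∑ u ∈ U, Real.exp (lam * ∑ i, sgnB (σ i) * g u i) := by
          refine Finset.sum_le_sum fun σ _ => ?_
          exact Finset.single_le_sum
            (f := fun u => Real.exp (lam * ∑ i, sgnB (σ i) * g u i))
            (fun u _ => (Real.exp_pos _).le) (hv σ)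
      _ = ∑ u ∈ U, ∑ σ : Fin n → Bool, Real.exp (lam * ∑ i, sgnB (σ i) * g u i) :=
          Finset.sum_comm
      _ ≤ ∑ u ∈ U, 2 ^ n * Real.exp (n * (lam ^ 2 * B ^ 2 / 2)) :=
          Finset.sum_le_sum fun u _ => sum_exp_sign (g u) B lam (hg u)
      _ = _ := by rw [Finset.sum_const, nsmul_eq_mul, hec]; ring
  have hpt : ∀ σ, lam * M σ ≤ c - 1 + Real.exp (lam * M σ) * Real.exp (-c) := by
    intro σ
    rw [← Real.exp_add]
    have := Real.add_one_le_exp (lam * M σ + -c)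
    linarith
  have hs : ∑ σ, lam * M σ ≤ 2 ^ n * c := by
    calc ∑ σ, lam * M σ ≤ ∑ σ, (c - 1 + Real.exp (lam * M σ) * Real.exp (-c)) :=
          Finset.sum_le_sum fun σ _ => hpt σ
      _ = 2 ^ n * (c - 1) + (∑ σ, Real.exp (lam * M σ)) * Real.exp (-c) := by
          rw [Finset.sum_add_distrib, ← Finset.sum_mul]
          simp
          ring
      _ ≤ 2 ^ n * (c - 1) + (2 ^ n * Real.exp c) * Real.exp (-c) := by
          have := mul_le_mul_of_nonneg_right hE (Real.exp_pos (-c)).le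
          linarith
      _ = 2 ^ n * c := by
          rw [mul_assoc, ← Real.exp_add]; simp; ring
  rw [← Finset.mul_sum] at hs
  have hp : (0 : ℝ) < 2 ^ n := by positivity
  have : lam * ((2 ^ n : ℝ)⁻¹ * ∑ σ, M σ) = (2 ^ n : ℝ)⁻¹ * (lam * ∑ σ, M σ) := by ring
  rw [this]
  calc _ ≤ (2 ^ n : ℝ)⁻¹ * (2 ^ n * c) := by gcongr
    _ = c := by field_simp

lemma opt_lam (X A B : ℝ) (hA : 0 < A) (hB : 0 ≤ B)
    (h : ∀ lam : ℝ, 0 < lam → lam * X ≤ A + lam ^ 2 * B ^ 2 / 2) :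
    X ≤ B * Real.sqrt (2 * A) := by
  rcases hB.eq_or_lt with rfl | hB
  · by_contra hX
    have hX : 0 < X := by simpa using hX
    have := h (2 * A / X) (by positivity)
    have h2 : 2 * A / X * X = 2 * A := by field_simp
    rw [h2] at this
    simp at this
    linarith
  · set s := Real.sqrt (2 * A) with hs
    have hs0 : 0 < s := Real.sqrt_pos.2 (by positivity)
    have hs2 : s ^ 2 = 2 * A := Real.sq_sqrt (by positivity)
    have := h (s / B) (by positivity)
    have h2 : (s / B) ^ 2 * B ^ 2 = s ^ 2 := by field_simp
    rw [h2] at this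
    have h3 : s / B * X ≤ s * s := by nlinarith
    have h4 : s * X ≤ s * (B * s) := by
      have := mul_le_mul_of_nonneg_left h3 hB.le
      have e : B * (s / B * X) = s * X := by field_simp
      rw [e] at this
      linarith
    exact le_of_mul_le_mul_left h4 hs0

lemma sum_sgn_zero (n : ℕ) : ∑ σ : Fin n → Bool, ∑ i, sgnB (σ i) = 0 := by
  have h := Equiv.sum_comp (Equiv.piCongrRight fun _ : Fin n => Equiv.boolNot)
    (fun σ : Fin n → Bool => ∑ i, sgnB (σ i))
  have h2 : ∀ x : Bool, sgnB (!x) = - sgnB x := by intro x; cases x <;> simp [sgnB]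
  simp [h2] at h
  linarith

lemma exists_nn {X : Type*} [MetricSpace X] (C : Finset X) (hC : 2 < C.card) (a : X) :
    ∃ b ∈ C, b ≠ a ∧ nnDist C a = dist a b := by
  have hne : {b | b ∈ C ∧ b ≠ a}.Nonempty := by
    obtain ⟨b, hb, hba⟩ := Finset.exists_mem_ne (by omega : 1 < C.card) a
    exact ⟨b, hb, hba⟩
  have hfin : {b | b ∈ C ∧ b ≠ a}.Finite := C.finite_toSet.subset fun x hx => hx.1
  have := (hne.image (fun b => dist a b)).csInf_mem (hfin.image _)
  obtain ⟨b, hb, h⟩ := this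
  exact ⟨b, hb.1, hb.2, h.symm⟩

lemma nn_le_cov {X : Type*} [MetricSpace X] (C : Finset X) (a : X) (ha : a ∈ C) :
    nnDist C a ≤ covDiam C :=
  le_csSup (C.finite_toSet.image _).bddAbove ⟨a, ha, rfl⟩

lemma cov_pos {X : Type*} [MetricSpace X] (C : Finset X) (hC : 2 < C.card) : 0 < covDiam C := by
  obtain ⟨a, ha⟩ := Finset.card_pos.1 (by omega : 0 < C.card)
  obtain ⟨b, hb, hba, h⟩ := exists_nn C hC a
  refine lt_of_lt_of_le ?_ (nn_le_cov C a ha)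
  rw [h]; exact dist_pos.2 hba.symm

lemma exists_cover {X : Type*} [MetricSpace X] (C : Finset X) (hC : 2 < C.card) :
    ∃ U : Finset (Finset X), U.card = Tnum C ∧
    (∀ u ∈ U, u ⊆ C ∧ 2 ≤ u.card ∧ Metric.diam (u : Set X) ≤ covDiam C) ∧
    ∀ a ∈ C, ∃ u ∈ U, a ∈ u := by
  classical
  refine Nat.sInf_mem (s := {m : ℕ | ∃ U : Finset (Finset X), U.card = m ∧
    (∀ u ∈ U, u ⊆ C ∧ 2 ≤ u.card ∧ Metric.diam (u : Set X) ≤ covDiam C) ∧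
    ∀ a ∈ C, ∃ u ∈ U, a ∈ u}) ?_
  choose f hf hfa hfd using exists_nn C hC
  refine ⟨_, C.image (fun a => {a, f a}), rfl, ?_, ?_⟩
  · intro u hu
    obtain ⟨a, ha, rfl⟩ := Finset.mem_image.1 hu
    refine ⟨?_, ?_, ?_⟩
    · intro x hx
      rcases Finset.mem_insert.1 hx with rfl | hx
      · exact ha
      · rw [Finset.mem_singleton.1 hx]; exact hf a
    · rw [Finset.card_pair (hfa a).symm]
    · have : ((({a, f a} : Finset X)) : Set X) = {a, f a} := by simp
      rw [this, Metric.diam_pair, ← hfd]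
      exact nn_le_cov C a ha
  · intro a ha
    exact ⟨{a, f a}, Finset.mem_image.2 ⟨a, ha, rfl⟩, by simp⟩

/-- no-outliers variant of the finite-Minkowski-dimension bound.
If `ℓ` is `L`-Lipschitz in `θ` (w.r.t. the `ℓ∞` metric on `ℝᵏ`) and takes values in an interval
of length `b`, `Θ̂ⁿ ⊂ ℝᵏ` is finite, non-focal, with `|Θ̂ⁿ| > 2`, and
`L ∇(Θ̂ⁿ) ≤ b √((2 dim_fM(Θ̂ⁿ)/n) log(Δ(Θ̂ⁿ)/∇(Θ̂ⁿ)))`, then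
`Rad(Θ̂ⁿ, S⁺) ≤ 2b √((2 dim_fM(Θ̂ⁿ)/n) log(Δ(Θ̂ⁿ)/∇(Θ̂ⁿ)))`. -/
theorem stmt_5 {Z : Type*} (k n : ℕ) (hn : 0 < n)
    (ℓ : (Fin k → ℝ) → Z → ℝ) (L a b : ℝ) (hL : 0 ≤ L)
    (hLip : ∀ z θ θ', |ℓ θ z - ℓ θ' z| ≤ L * dist θ θ')
    (hrange : ∀ θ z, ℓ θ z ∈ Set.Icc a (a + b))
    (C : Finset (Fin k → ℝ)) (hCcard : 2 < C.card)
    (hCnonfocal : covDiam C < Metric.diam (C : Set (Fin k → ℝ)))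
    (hno : L * covDiam C ≤
      b * Real.sqrt ((2 * dimfM C / n) *
        Real.log (Metric.diam (C : Set (Fin k → ℝ)) / covDiam C)))
    (S : Fin n → Z) :
    rad ℓ (C : Set (Fin k → ℝ)) S ≤
      2 * b * Real.sqrt ((2 * dimfM C / n) *
        Real.log (Metric.diam (C : Set (Fin k → ℝ)) / covDiam C)) := by
  classical
  have hcov := cov_pos C hCcard
  have hlog : 0 < Real.log (Metric.diam (C : Set (Fin k → ℝ)) / covDiam C) :=
    Real.log_pos ((one_lt_div hcov).2 hCnonfocal)
  have hkey : (2 * dimfM C / n) * Real.log (Metric.diam (C : Set (Fin k → ℝ)) / covDiam C)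
      = 2 * Real.log (Tnum C) / n := by
    unfold dimfM
    field_simp
  rw [hkey] at hno ⊢
  obtain ⟨U, hUcard, hU, hcover⟩ := exists_cover C hCcard
  obtain ⟨c0, hc0⟩ := Finset.card_pos.1 (by omega : 0 < C.card)
  have hUne : U.Nonempty := by
    obtain ⟨u, hu, _⟩ := hcover c0 hc0
    exact ⟨u, hu⟩
  have hU2 : 1 < U.card := by
    by_contra hlt
    obtain ⟨u, hu⟩ := Finset.card_eq_one.1 (le_antisymm (not_lt.1 hlt) hUne.card_pos)
    have hsub : (C : Set (Fin k → ℝ)) ⊆ u := by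
      intro x hx
      obtain ⟨w, hw, hxw⟩ := hcover x hx
      rw [hu, Finset.mem_singleton] at hw
      rw [hw] at hxw; exact hxw
    have h1 := Metric.diam_mono hsub u.finite_toSet.isBounded
    have h2 := (hU u (by simp [hu])).2.2
    linarith
  have hA : 0 < Real.log (Tnum C) := by
    rw [← hUcard]
    exact Real.log_pos (by exact_mod_cast hU2)
  have hnR : (0 : ℝ) < n := by exact_mod_cast hn
  have hb : 0 ≤ b := by
    have := hrange 0 (S ⟨0, hn⟩)
    linarith [this.1, this.2]
  -- representatives of the members of the cover
  have hrep : ∃ r : Finset (Fin k → ℝ) → (Fin k → ℝ), ∀ u ∈ U, r u ∈ u := by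
    refine ⟨fun u => if h : u.Nonempty then h.choose else 0, fun u hu => ?_⟩
    have hne : u.Nonempty := Finset.card_pos.1 (by have := (hU u hu).2.1; omega)
    simp only [hne, dif_pos]
    exact hne.choose_spec
  obtain ⟨r, hr⟩ := hrep
  let g : Finset (Fin k → ℝ) → Fin n → ℝ := fun u i => ℓ (r u) (S i) - a
  have hg : ∀ u i, |g u i| ≤ b := by
    intro u i
    have := hrange (r u) (S i)
    rw [abs_le]
    constructor <;> simp only [g] <;> linarith [this.1, this.2]
  have hsup : ∀ σ : Fin n → Bool, ∃ u ∈ U,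
      sSup ((fun θ => ∑ i, (if σ i then (1 : ℝ) else -1) * ℓ θ (S i)) '' (C : Set (Fin k → ℝ)))
        ≤ n * (L * covDiam C) + ∑ i, sgnB (σ i) * g u i + a * ∑ i, sgnB (σ i) := by
    intro σ
    have hne : (C : Set (Fin k → ℝ)).Nonempty := ⟨c0, hc0⟩
    obtain ⟨θ, hθ, h⟩ := (hne.image
      (fun θ => ∑ i, (if σ i then (1 : ℝ) else -1) * ℓ θ (S i))).csSup_mem
        (C.finite_toSet.image _)
    obtain ⟨u, hu, hθu⟩ := hcover θ hθ
    refine ⟨u, hu, ?_⟩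
    rw [← h]
    have hd : dist θ (r u) ≤ covDiam C :=
      (Metric.dist_le_diam_of_mem u.finite_toSet.isBounded hθu (hr u hu)).trans (hU u hu).2.2
    have hterm : ∀ i : Fin n, (if σ i then (1 : ℝ) else -1) * ℓ θ (S i)
        ≤ L * covDiam C + sgnB (σ i) * g u i + a * sgnB (σ i) := by
      intro i
      have h1 := (hLip (S i) θ (r u)).trans (mul_le_mul_of_nonneg_left hd hL)
      rw [abs_le] at h1
      by_cases hσ : σ i <;> simp [sgnB, g, hσ] <;> linarith [h1.1, h1.2]
    calc _ ≤ ∑ i : Fin n, (L * covDiam C + sgnB (σ i) * g u i + a * sgnB (σ i)) :=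
          Finset.sum_le_sum fun i _ => hterm i
      _ = _ := by
          rw [Finset.sum_add_distrib, Finset.sum_add_distrib, ← Finset.mul_sum _ _ a]
          simp
  choose v hv hvs using hsup
  set X := (2 ^ n : ℝ)⁻¹ * ∑ σ : Fin n → Bool, ∑ i, sgnB (σ i) * g (v σ) i with hXdef
  have hX : X ≤ (Real.sqrt n * b) * Real.sqrt (2 * Real.log (Tnum C)) := by
    refine opt_lam X _ _ hA (by positivity) fun lam _ => ?_
    have := massart_lam U hUne g b lam hg v hv
    rw [hUcard] at this
    rw [mul_pow, Real.sq_sqrt hnR.le]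
    refine this.trans (le_of_eq ?_)
    ring
  have hp : (0 : ℝ) < 2 ^ n := by positivity
  have hmain : (2 ^ n : ℝ)⁻¹ * ∑ σ : Fin n → Bool,
      sSup ((fun θ => ∑ i, (if σ i then (1 : ℝ) else -1) * ℓ θ (S i)) '' (C : Set (Fin k → ℝ)))
      ≤ n * (L * covDiam C) + X := by
    calc _ ≤ (2 ^ n : ℝ)⁻¹ * ∑ σ : Fin n → Bool,
          (n * (L * covDiam C) + ∑ i, sgnB (σ i) * g (v σ) i + a * ∑ i, sgnB (σ i)) := by
          gcongr with σ
          exact hvs σ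
      _ = _ := by
          rw [Finset.sum_add_distrib, Finset.sum_add_distrib, ← Finset.mul_sum _ _ a,
            sum_sgn_zero, hXdef]
          simp only [Finset.sum_const, Finset.card_univ, Fintype.card_fun, Fintype.card_bool,
            Fintype.card_fin, nsmul_eq_mul]
          push_cast
          field_simp
          ring
  unfold rad
  have hsq : Real.sqrt (2 * Real.log (Tnum C) / n)
      = (n : ℝ)⁻¹ * (Real.sqrt n * Real.sqrt (2 * Real.log (Tnum C))) := by
    rw [Real.sqrt_div (by positivity)]
    have h1 : Real.sqrt n * Real.sqrt n = n := Real.mul_self_sqrt hnR.le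
    have h2 : 0 < Real.sqrt n := Real.sqrt_pos.2 hnR
    rw [div_eq_iff h2.ne']
    calc _ = (n : ℝ)⁻¹ * n * Real.sqrt (2 * Real.log (Tnum C)) := by
          rw [inv_mul_cancel₀ hnR.ne', one_mul]
      _ = (n : ℝ)⁻¹ * (Real.sqrt n * Real.sqrt n) * Real.sqrt (2 * Real.log (Tnum C)) := by
          rw [h1]
      _ = _ := by ring
  calc _ ≤ (n : ℝ)⁻¹ * (n * (L * covDiam C)
        + (Real.sqrt n * b) * Real.sqrt (2 * Real.log (Tnum C))) := by
        gcongr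
        linarith
    _ = L * covDiam C + b * Real.sqrt (2 * Real.log (Tnum C) / n) := by
        rw [hsq]
        field_simp
    _ ≤ _ := by linarith
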